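/- The following four identities hold: (L_{t₁,t₂}⊗I_{t₃})∘(I_{t₁}⊗Y_{t₂,t₃}) = Y_{t₄,t₃}∘L_{t₁,t₆} + ((−1)^{σ₂}·λ₁/(λ₁+λ₂))·Y'_{t₄,t₃}∘L'_{t₁,t₆} as linear maps V_{t₁}⊗V_{t₆} → V_{t₄}⊗V_{t₃}; (L'_{t₁,t₂}⊗I_{t₃})∘(I_{t₁}⊗Y'_{t₂,t₃}) = Y'_{t₇,t₃}∘L'_{t₁,t₉} − ((−1)^{σ₂}·λ₃/(λ₂+λ₃))·Y_{t₇,t₃}∘L_{t₁,t₉} as linear maps V_{t₁}⊗V_{t₉} → V_{t₇}⊗V_{t₃}; (L'_{t₁,t₂}⊗I_{t₃})∘(I_{t₁}⊗Y_{t₂,t₃}) = Y_{t₇,t₃}∘L'_{t₁,t₆} as linear maps V_{t₁}⊗V_{t₆} → V_{t₇}⊗V_{t₃}; and (L_{t₁,t₂}⊗I_{t₃})∘(I_{t₁}⊗Y'_{t₂,t₃}) = κ·Y'_{t₄,t₃}∘L_{t₁,t₉} as linear maps V_{t₁}⊗V_{t₉} → V_{t₄}⊗V_{t₃}. -/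

import Mathlib

open TensorProduct

noncomputable section

/-- a triple t = (λ, μ, σ) ∈ ℚ × ℚ × ℤ/2 -/
structure Triple where
  lam : ℚ
  mu : ℚ
  sg : ZMod 2

instance : Add Triple := ⟨fun a b => ⟨a.lam + b.lam, a.mu + b.mu, a.sg + b.sg⟩⟩
instance : Neg Triple := ⟨fun a => ⟨-a.lam, -a.mu, -a.sg⟩⟩
instance : Sub Triple := ⟨fun a b => a + -b⟩

def e₂ : Triple := ⟨0, 1, 0⟩
def e₃ : Triple := ⟨0, 0, 1⟩
/-- t* = (−λ, −μ, σ+1) -/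
def Triple.star (t : Triple) : Triple := ⟨-t.lam, -t.mu, t.sg + 1⟩

/-- the underlying space of every V_t: basis v = (1,0) (degree σ), w = (0,1) (degree σ+1) -/
abbrev V : Type := ℚ × ℚ
abbrev VV : Type := V ⊗[ℚ] V
abbrev VVV : Type := V ⊗[ℚ] VV

def vv : V := (1, 0)
def ww : V := (0, 1)

/-- (−1)^σ -/
def sgn (s : ZMod 2) : ℚ := if s = 0 then 1 else -1

/-- H: v ↦ (μ+1)v, w ↦ (μ−1)w -/
def opH (t : Triple) : V →ₗ[ℚ] V :=
  LinearMap.prodMap ((t.mu + 1) • LinearMap.id) ((t.mu - 1) • LinearMap.id)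
/-- D: multiplication by λ -/
def opD (t : Triple) : V →ₗ[ℚ] V := t.lam • LinearMap.id
/-- E: v ↦ 0, w ↦ λv -/
def opE (t : Triple) : V →ₗ[ℚ] V := (LinearMap.inl ℚ ℚ ℚ) ∘ₗ (t.lam • LinearMap.snd ℚ ℚ ℚ)
/-- F: v ↦ w, w ↦ 0 -/
def opF (t : Triple) : V →ₗ[ℚ] V := (LinearMap.inr ℚ ℚ ℚ) ∘ₗ (LinearMap.fst ℚ ℚ ℚ)
/-- the parity operator x ↦ (−1)^{deg x} x on V_t -/
def opJ (t : Triple) : V →ₗ[ℚ] V :=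
  LinearMap.prodMap (sgn t.sg • LinearMap.id) ((- sgn t.sg) • LinearMap.id)

/-- the four generators H, D, E, F of gl(1|1) -/
inductive Gen | H | D | E | F

/-- H and D have degree 0; E and F have degree 1 -/
def Gen.isEven : Gen → Bool
  | .H => true | .D => true | .E => false | .F => false

def op : Gen → Triple → V →ₗ[ℚ] V
  | .H, t => opH t
  | .D, t => opD t
  | .E, t => opE t
  | .F, t => opF t

/-- the super-Leibniz action X·(x⊗y) = (X·x)⊗y + (−1)^{deg X·deg x}·x⊗(X·y)
on V_{t₁}⊗V_{t₂} (the sign being implemented by the parity operator) -/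
def op2 (g : Gen) (t₁ t₂ : Triple) : VV →ₗ[ℚ] VV :=
  TensorProduct.map (op g t₁) LinearMap.id +
  TensorProduct.map (if g.isEven then LinearMap.id else opJ t₁) (op g t₂)

/-- the linear map ℚ×ℚ → M sending (1,0) ↦ p and (0,1) ↦ q -/
def bmap {M : Type*} [AddCommGroup M] [Module ℚ M] (p q : M) : V →ₗ[ℚ] M :=
  LinearMap.coprod (LinearMap.toSpanSingleton ℚ M p) (LinearMap.toSpanSingleton ℚ M q)

/-- Y_{t₁,t₂} : V_{t₁+t₂+e₂} → V_{t₁}⊗V_{t₂} -/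
def Ymap (t₁ t₂ : Triple) : V →ₗ[ℚ] VV :=
  bmap (vv ⊗ₜ[ℚ] vv) (ww ⊗ₜ[ℚ] vv + sgn t₁.sg • (vv ⊗ₜ[ℚ] ww))

/-- Y'_{t₁,t₂} : V_{t₁+t₂−e₂+e₃} → V_{t₁}⊗V_{t₂} -/
def Y'map (t₁ t₂ : Triple) : V →ₗ[ℚ] VV :=
  bmap ((t₁.lam + t₂.lam)⁻¹ •
      (t₁.lam • (vv ⊗ₜ[ℚ] ww) - (sgn t₁.sg * t₂.lam) • (ww ⊗ₜ[ℚ] vv)))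
    (ww ⊗ₜ[ℚ] ww)

/-- L_{t₁,t₂} : V_{t₁}⊗V_{t₂} → V_{t₁+t₂+e₂} -/
def Lmap (t₁ t₂ : Triple) : VV →ₗ[ℚ] V :=
  TensorProduct.lift (LinearMap.mk₂ ℚ
    (fun x y => ((x.1 * y.1 : ℚ),
      (t₁.lam / (t₁.lam + t₂.lam)) * (x.2 * y.1)
        + (sgn t₁.sg * t₂.lam / (t₁.lam + t₂.lam)) * (x.1 * y.2)))
    (by intro x x' y; apply Prod.ext <;> simp <;> ring)
    (by intro a x y; apply Prod.ext <;> simp [smul_eq_mul] <;> ring)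
    (by intro x y y'; apply Prod.ext <;> simp <;> ring)
    (by intro a x y; apply Prod.ext <;> simp [smul_eq_mul] <;> ring))

/-- L'_{t₁,t₂} : V_{t₁}⊗V_{t₂} → V_{t₁+t₂−e₂+e₃} -/
def L'map (t₁ t₂ : Triple) : VV →ₗ[ℚ] V :=
  TensorProduct.lift (LinearMap.mk₂ ℚ
    (fun x y => ((x.1 * y.2 - sgn t₁.sg * (x.2 * y.1) : ℚ), (x.2 * y.2 : ℚ)))
    (by intro x x' y; apply Prod.ext <;> simp <;> ring)
    (by intro a x y; apply Prod.ext <;> simp [smul_eq_mul] <;> ring)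
    (by intro x y y'; apply Prod.ext <;> simp <;> ring)
    (by intro a x y; apply Prod.ext <;> simp [smul_eq_mul] <;> ring))

/-- ∩_t : V_{t*}⊗V_t → ℚ -/
def capMap (t : Triple) : VV →ₗ[ℚ] ℚ :=
  TensorProduct.lift (LinearMap.mk₂ ℚ
    (fun x y => (x.1 * y.2 + sgn t.sg * (x.2 * y.1) : ℚ))
    (by intro x x' y; simp; ring)
    (by intro a x y; simp [smul_eq_mul]; ring)
    (by intro x y y'; simp; ring)
    (by intro a x y; simp [smul_eq_mul]; ring))

/-- ∪_t : ℚ → V_{t*}⊗V_t -/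
def cupMap (t : Triple) : ℚ →ₗ[ℚ] VV :=
  LinearMap.toSpanSingleton ℚ VV (ww ⊗ₜ[ℚ] vv - sgn t.sg • (vv ⊗ₜ[ℚ] ww))


/-- t₄ = t₁+t₂+e₂ -/
def T4 (t₁ t₂ : Triple) : Triple := t₁ + t₂ + e₂
/-- t₅ = t₄+t₃+e₂ -/
def T5 (t₁ t₂ t₃ : Triple) : Triple := T4 t₁ t₂ + t₃ + e₂
/-- t₆ = t₂+t₃+e₂ -/
def T6 (t₂ t₃ : Triple) : Triple := t₂ + t₃ + e₂
/-- t₇ = t₄−2e₂+e₃ -/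
def T7 (t₁ t₂ : Triple) : Triple := T4 t₁ t₂ - e₂ - e₂ + e₃
/-- t₈ = t₅−2e₂+e₃ -/
def T8 (t₁ t₂ t₃ : Triple) : Triple := T5 t₁ t₂ t₃ - e₂ - e₂ + e₃
/-- t₉ = t₆−2e₂+e₃ -/
def T9 (t₂ t₃ : Triple) : Triple := T6 t₂ t₃ - e₂ - e₂ + e₃
/-- κ = λ₂(λ₁+λ₂+λ₃)/((λ₁+λ₂)(λ₂+λ₃)) -/
def kap (t₁ t₂ t₃ : Triple) : ℚ :=
  t₂.lam * (t₁.lam + t₂.lam + t₃.lam) / ((t₁.lam + t₂.lam) * (t₂.lam + t₃.lam))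

/-!
Both sides of each identity are linear maps on `V ⊗ V`, so it suffices to compare them on the four
tensors of basis vectors. There the signs cancel because `(-1) ^ σ` squares to `1`. The coefficients
in the first identity match by expanding `x / (x + y)` and `y / (x + y)` over `x + y + z` at
`(x, y, z) = (λ₁, λ₂, λ₃)`, those in the second by the same expansions at `(λ₃, λ₂, λ₁)`; the third
involves no fractions, and in the fourth the factor `κ` is a common ratio of all coefficients.
-/

namespace Triple

@[simp] theorem lam_add (a b : Triple) : (a + b).lam = a.lam + b.lam := rfl

@[simp] theorem lam_sub (a b : Triple) : (a - b).lam = a.lam - b.lam :=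
  (sub_eq_add_neg a.lam b.lam).symm

@[simp] theorem sg_add (a b : Triple) : (a + b).sg = a.sg + b.sg := rfl

@[simp] theorem sg_sub (a b : Triple) : (a - b).sg = a.sg - b.sg :=
  (sub_eq_add_neg a.sg b.sg).symm

end Triple

theorem sgn_mul_self (s : ZMod 2) : sgn s * sgn s = 1 := by
  unfold sgn
  split_ifs <;> norm_num

theorem sgn_add (s t : ZMod 2) : sgn (s + t) = sgn s * sgn t := by
  decide +revert +kernel

theorem sgn_mul_sgn_mul_self (s t : ZMod 2) : sgn s * sgn t * (sgn s * sgn t) = 1 := by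
  rw [← sgn_add, sgn_mul_self]

theorem sgn_add_one (s : ZMod 2) : sgn (s + 1) = -sgn s := by
  rw [sgn_add, show sgn 1 = -1 from if_neg one_ne_zero, mul_neg_one]

section Labels

variable (a b : Triple)

@[simp] theorem lam_T4 : (T4 a b).lam = a.lam + b.lam := by simp [T4, e₂]

@[simp] theorem lam_T6 : (T6 a b).lam = a.lam + b.lam := by simp [T6, e₂]

@[simp] theorem lam_T7 : (T7 a b).lam = a.lam + b.lam := by simp [T7, e₂, e₃]

@[simp] theorem lam_T9 : (T9 a b).lam = a.lam + b.lam := by simp [T9, e₂, e₃]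

@[simp] theorem sgn_T4_sg : sgn (T4 a b).sg = sgn a.sg * sgn b.sg := by
  simp [T4, e₂, sgn_add]

@[simp] theorem sgn_T7_sg : sgn (T7 a b).sg = -(sgn a.sg * sgn b.sg) := by
  simp [T7, e₂, e₃, sgn_add_one]

end Labels

section BasisValues

variable (a b : Triple)

theorem bmap_vv {M : Type*} [AddCommGroup M] [Module ℚ M] (p q : M) : bmap p q vv = p := by
  simp [bmap, vv]

theorem bmap_ww {M : Type*} [AddCommGroup M] [Module ℚ M] (p q : M) : bmap p q ww = q := by
  simp [bmap, ww]

@[simp] theorem Ymap_vv : Ymap a b vv = vv ⊗ₜ vv := bmap_vv _ _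

@[simp] theorem Ymap_ww : Ymap a b ww = ww ⊗ₜ vv + sgn a.sg • (vv ⊗ₜ ww) := bmap_ww _ _

@[simp] theorem Y'map_vv :
    Y'map a b vv = (a.lam + b.lam)⁻¹ • (a.lam • (vv ⊗ₜ ww) - (sgn a.sg * b.lam) • (ww ⊗ₜ vv)) :=
  bmap_vv _ _

@[simp] theorem Y'map_ww : Y'map a b ww = ww ⊗ₜ ww := bmap_ww _ _

@[simp] theorem Lmap_vv_tmul_vv : Lmap a b (vv ⊗ₜ vv) = vv := by simp [Lmap, vv]

@[simp] theorem Lmap_vv_tmul_ww :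
    Lmap a b (vv ⊗ₜ ww) = (sgn a.sg * b.lam / (a.lam + b.lam)) • ww := by
  simp [Lmap, vv, ww]

@[simp] theorem Lmap_ww_tmul_vv : Lmap a b (ww ⊗ₜ vv) = (a.lam / (a.lam + b.lam)) • ww := by
  simp [Lmap, vv, ww]

@[simp] theorem Lmap_ww_tmul_ww : Lmap a b (ww ⊗ₜ ww) = 0 := by simp [Lmap, ww]

@[simp] theorem L'map_vv_tmul_vv : L'map a b (vv ⊗ₜ vv) = 0 := by simp [L'map, vv]

@[simp] theorem L'map_vv_tmul_ww : L'map a b (vv ⊗ₜ ww) = vv := by simp [L'map, vv, ww]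

@[simp] theorem L'map_ww_tmul_vv : L'map a b (ww ⊗ₜ vv) = -sgn a.sg • vv := by
  simp [L'map, vv, ww]

@[simp] theorem L'map_ww_tmul_ww : L'map a b (ww ⊗ₜ ww) = ww := by simp [L'map, ww]

theorem VV_hom_ext {M : Type*} [AddCommGroup M] [Module ℚ M] {f g : VV →ₗ[ℚ] M}
    (hvv : f (vv ⊗ₜ vv) = g (vv ⊗ₜ vv)) (hvw : f (vv ⊗ₜ ww) = g (vv ⊗ₜ ww))
    (hwv : f (ww ⊗ₜ vv) = g (ww ⊗ₜ vv)) (hww : f (ww ⊗ₜ ww) = g (ww ⊗ₜ ww)) : f = g := by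
  ext <;> assumption

end BasisValues

/-- The composite `(L ⊗ I) ∘ (I ⊗ Y)` of a splitting `Y` of the right factor and a fusion `L` of
the two left factors, i.e. the left-hand side of each identity. The associator, implicit on paper,
rebrackets `V ⊗ (V ⊗ V)` in between. -/
def splitFuse (L : VV →ₗ[ℚ] V) (Y : V →ₗ[ℚ] VV) : VV →ₗ[ℚ] VV :=
  TensorProduct.map L LinearMap.id
    ∘ₗ (TensorProduct.assoc ℚ V V V).symm.toLinearMap
    ∘ₗ TensorProduct.map LinearMap.id Y

section SplitFuse

variable (L : VV →ₗ[ℚ] V) (a b : Triple) (x : V)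

@[simp] theorem splitFuse_Ymap_tmul_vv :
    splitFuse L (Ymap a b) (x ⊗ₜ vv) = L (x ⊗ₜ vv) ⊗ₜ vv := by
  simp [splitFuse]

@[simp] theorem splitFuse_Ymap_tmul_ww :
    splitFuse L (Ymap a b) (x ⊗ₜ ww) =
      L (x ⊗ₜ ww) ⊗ₜ vv + sgn a.sg • (L (x ⊗ₜ vv) ⊗ₜ ww) := by
  simp [splitFuse, tmul_add]

@[simp] theorem splitFuse_Y'map_tmul_vv :
    splitFuse L (Y'map a b) (x ⊗ₜ vv) =
      (a.lam + b.lam)⁻¹ •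
        (a.lam • (L (x ⊗ₜ vv) ⊗ₜ ww) - (sgn a.sg * b.lam) • (L (x ⊗ₜ ww) ⊗ₜ vv)) := by
  simp [splitFuse, tmul_sub]

@[simp] theorem splitFuse_Y'map_tmul_ww :
    splitFuse L (Y'map a b) (x ⊗ₜ ww) = L (x ⊗ₜ ww) ⊗ₜ ww := by
  simp [splitFuse]

end SplitFuse

section PartialFractions

variable {K : Type*} [Field K] {x y : K} (z : K)

theorem div_add_eq_div_add_mul_div (hxy : x + y ≠ 0) (hxyz : x + y + z ≠ 0) :
    x / (x + y) = x / (x + y + z) + x / (x + y) * (z / (x + y + z)) := by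
  field_simp

theorem div_add_eq_add_div_sub_mul_div (hxy : x + y ≠ 0) (hxyz : x + y + z ≠ 0) :
    y / (x + y) = (y + z) / (x + y + z) - x / (x + y) * (z / (x + y + z)) := by
  field_simp
  ring

end PartialFractions

section Identities

variable (t₁ t₂ t₃ : Triple)

theorem splitFuse_L'map_Ymap :
    splitFuse (L'map t₁ t₂) (Ymap t₂ t₃) = Ymap (T7 t₁ t₂) t₃ ∘ₗ L'map t₁ (T6 t₂ t₃) := by
  apply VV_hom_ext
  case hvv => simp
  case hvw => simp
  case hwv => simp [neg_tmul, ← smul_tmul']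
  case hww =>
    simp only [splitFuse_Ymap_tmul_ww, LinearMap.comp_apply, L'map_ww_tmul_vv, L'map_ww_tmul_ww,
      Ymap_ww, sgn_T7_sg, ← smul_tmul']
    module

variable {t₁ t₂ t₃}

theorem splitFuse_Lmap_Ymap (h₁₂ : t₁.lam + t₂.lam ≠ 0)
    (h₁₂₃ : t₁.lam + t₂.lam + t₃.lam ≠ 0) :
    splitFuse (Lmap t₁ t₂) (Ymap t₂ t₃) =
      Ymap (T4 t₁ t₂) t₃ ∘ₗ Lmap t₁ (T6 t₂ t₃)
      + (sgn t₂.sg * t₁.lam / (t₁.lam + t₂.lam)) •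
          (Y'map (T4 t₁ t₂) t₃ ∘ₗ L'map t₁ (T6 t₂ t₃)) := by
  apply VV_hom_ext
  case hvv => simp
  case hvw =>
    simp only [splitFuse_Ymap_tmul_ww, LinearMap.add_apply, LinearMap.smul_apply,
      LinearMap.comp_apply, Lmap_vv_tmul_vv, Lmap_vv_tmul_ww, L'map_vv_tmul_ww, map_smul, Ymap_ww,
      Y'map_vv, lam_T4, lam_T6, sgn_T4_sg, ← smul_tmul', ← add_assoc]
    match_scalars
    · linear_combination sgn t₁.sg * div_add_eq_add_div_sub_mul_div t₃.lam h₁₂ h₁₂₃ +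
        sgn t₁.sg * (t₁.lam / (t₁.lam + t₂.lam) * (t₃.lam / (t₁.lam + t₂.lam + t₃.lam))) *
          sgn_mul_self t₂.sg
    · field_simp
      linear_combination -sgn t₂.sg * (t₂.lam + t₃.lam) * sgn_mul_self t₁.sg
  case hwv =>
    simp only [splitFuse_Ymap_tmul_vv, LinearMap.add_apply, LinearMap.smul_apply,
      LinearMap.comp_apply, Lmap_ww_tmul_vv, L'map_ww_tmul_vv, map_smul, Ymap_ww,
      Y'map_vv, lam_T4, lam_T6, sgn_T4_sg, ← smul_tmul', ← add_assoc]
    match_scalars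
    · linear_combination div_add_eq_div_add_mul_div t₃.lam h₁₂ h₁₂₃ -
        t₁.lam / (t₁.lam + t₂.lam) * (t₃.lam / (t₁.lam + t₂.lam + t₃.lam)) *
          sgn_mul_sgn_mul_self t₁.sg t₂.sg
    · field_simp
      ring
  case hww => simp [← smul_tmul', smul_smul, mul_div_assoc]

theorem splitFuse_L'map_Y'map (h₂₃ : t₂.lam + t₃.lam ≠ 0)
    (h₁₂₃ : t₁.lam + t₂.lam + t₃.lam ≠ 0) :
    splitFuse (L'map t₁ t₂) (Y'map t₂ t₃) =
      Y'map (T7 t₁ t₂) t₃ ∘ₗ L'map t₁ (T9 t₂ t₃)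
      - (sgn t₂.sg * t₃.lam / (t₂.lam + t₃.lam)) •
          (Ymap (T7 t₁ t₂) t₃ ∘ₗ Lmap t₁ (T9 t₂ t₃)) := by
  have h₃₂ : t₃.lam + t₂.lam ≠ 0 := by rwa [add_comm]
  have h₃₂₁ : t₃.lam + t₂.lam + t₁.lam ≠ 0 := by rwa [add_comm, add_comm t₃.lam, ← add_assoc]
  apply VV_hom_ext
  case hvv => simp [smul_smul, div_eq_inv_mul]
  case hvw =>
    simp only [splitFuse_Y'map_tmul_ww, LinearMap.sub_apply, LinearMap.smul_apply,
      LinearMap.comp_apply, Lmap_vv_tmul_ww, L'map_vv_tmul_ww, map_smul, Ymap_ww,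
      Y'map_vv, lam_T7, lam_T9, sgn_T7_sg, ← add_assoc]
    match_scalars
    · field_simp
      linear_combination -t₃.lam * sgn_mul_sgn_mul_self t₁.sg t₂.sg
    · field_simp
      ring
  case hwv =>
    simp only [splitFuse_Y'map_tmul_vv, LinearMap.sub_apply, LinearMap.smul_apply,
      LinearMap.comp_apply, Lmap_ww_tmul_vv, L'map_ww_tmul_vv, L'map_ww_tmul_ww, map_smul, Ymap_ww,
      Y'map_vv, lam_T7, lam_T9, sgn_T7_sg, ← smul_tmul', ← add_assoc]
    match_scalars
    · linear_combination -sgn t₁.sg * div_add_eq_add_div_sub_mul_div t₁.lam h₃₂ h₃₂₁ -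
        sgn t₁.sg * (t₃.lam / (t₃.lam + t₂.lam) * (t₁.lam / (t₃.lam + t₂.lam + t₁.lam))) *
          sgn_mul_self t₂.sg
    · linear_combination -sgn t₂.sg * div_add_eq_div_add_mul_div t₁.lam h₃₂ h₃₂₁ +
        sgn t₂.sg * (t₃.lam / (t₃.lam + t₂.lam + t₁.lam)) * sgn_mul_self t₁.sg
  case hww => simp

theorem splitFuse_Lmap_Y'map (h₁₂ : t₁.lam + t₂.lam ≠ 0) (h₂₃ : t₂.lam + t₃.lam ≠ 0)
    (h₁₂₃ : t₁.lam + t₂.lam + t₃.lam ≠ 0) :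
    splitFuse (Lmap t₁ t₂) (Y'map t₂ t₃) =
      kap t₁ t₂ t₃ • (Y'map (T4 t₁ t₂) t₃ ∘ₗ Lmap t₁ (T9 t₂ t₃)) := by
  apply VV_hom_ext
  case hvv =>
    simp only [splitFuse_Y'map_tmul_vv, LinearMap.smul_apply, LinearMap.comp_apply, kap,
      Lmap_vv_tmul_vv, Lmap_vv_tmul_ww, Y'map_vv, lam_T4, sgn_T4_sg, ← smul_tmul']
    match_scalars <;> field_simp
  case hvw =>
    simp only [splitFuse_Y'map_tmul_ww, LinearMap.smul_apply, LinearMap.comp_apply, kap,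
      Lmap_vv_tmul_ww, map_smul, Y'map_ww, lam_T9, ← smul_tmul', ← add_assoc]
    match_scalars
    field_simp
  case hwv =>
    simp only [splitFuse_Y'map_tmul_vv, LinearMap.smul_apply, LinearMap.comp_apply, kap,
      Lmap_ww_tmul_vv, Lmap_ww_tmul_ww, map_smul, Y'map_ww, lam_T9, zero_tmul, ← smul_tmul',
      ← add_assoc]
    match_scalars
    field_simp
  case hww => simp

end Identities

/-- Lemma 26. -/
theorem stmt14 (t₁ t₂ t₃ : Triple)
    (h₁ : t₁.lam ≠ 0) (h₂ : t₂.lam ≠ 0) (h₃ : t₃.lam ≠ 0)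
    (h₁₂ : t₁.lam + t₂.lam ≠ 0) (h₂₃ : t₂.lam + t₃.lam ≠ 0)
    (h₁₂₃ : t₁.lam + t₂.lam + t₃.lam ≠ 0) :
    TensorProduct.map (Lmap t₁ t₂) LinearMap.id
        ∘ₗ (TensorProduct.assoc ℚ V V V).symm.toLinearMap
        ∘ₗ TensorProduct.map LinearMap.id (Ymap t₂ t₃) =
      Ymap (T4 t₁ t₂) t₃ ∘ₗ Lmap t₁ (T6 t₂ t₃)
      + (sgn t₂.sg * t₁.lam / (t₁.lam + t₂.lam)) •
          (Y'map (T4 t₁ t₂) t₃ ∘ₗ L'map t₁ (T6 t₂ t₃)) ∧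
    TensorProduct.map (L'map t₁ t₂) LinearMap.id
        ∘ₗ (TensorProduct.assoc ℚ V V V).symm.toLinearMap
        ∘ₗ TensorProduct.map LinearMap.id (Y'map t₂ t₃) =
      Y'map (T7 t₁ t₂) t₃ ∘ₗ L'map t₁ (T9 t₂ t₃)
      - (sgn t₂.sg * t₃.lam / (t₂.lam + t₃.lam)) •
          (Ymap (T7 t₁ t₂) t₃ ∘ₗ Lmap t₁ (T9 t₂ t₃)) ∧
    TensorProduct.map (L'map t₁ t₂) LinearMap.id
        ∘ₗ (TensorProduct.assoc ℚ V V V).symm.toLinearMap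
        ∘ₗ TensorProduct.map LinearMap.id (Ymap t₂ t₃) =
      Ymap (T7 t₁ t₂) t₃ ∘ₗ L'map t₁ (T6 t₂ t₃) ∧
    TensorProduct.map (Lmap t₁ t₂) LinearMap.id
        ∘ₗ (TensorProduct.assoc ℚ V V V).symm.toLinearMap
        ∘ₗ TensorProduct.map LinearMap.id (Y'map t₂ t₃) =
      kap t₁ t₂ t₃ • (Y'map (T4 t₁ t₂) t₃ ∘ₗ Lmap t₁ (T9 t₂ t₃)) := by
  exact ⟨splitFuse_Lmap_Ymap h₁₂ h₁₂₃, splitFuse_L'map_Y'map h₂₃ h₁₂₃,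
    splitFuse_L'map_Ymap t₁ t₂ t₃, splitFuse_Lmap_Y'map h₁₂ h₂₃ h₁₂₃⟩

end
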